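/- Let A ∈ ℝ^{m×n} have unit ℓ₂-norm columns and satisfy the RIP of order K+1 with constant δ ∈ [0,1). Let x ∈ ℝ^n be K-sparse with support S = supp(x), let S' be a proper subset of S with |S'| = k, set r = P_{S'}^⊥ A x, let j ∈ {1,…,n} \ S, and put q = √(K−k) · ‖x_{S\S'}‖₂ · |⟨r, a_j⟩| / ‖P_{S'}^⊥ a_j‖₂. Then ‖r‖₂² − q ≥ (1 − (1 + (K−k)/4)·δ) · ‖x_{S\S'}‖₂². -/

import Mathlib

open Finset

noncomputable section

/-- The support of a vector as a `Finset`. -/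
def vsupp {n : ℕ} (x : Fin n → ℝ) : Finset (Fin n) :=
  Finset.univ.filter (fun i => x i ≠ 0)

/-- `A` satisfies the restricted isometry property of order `r` with constant `δ`. -/
def RIP {m n : ℕ} (A : Matrix (Fin m) (Fin n) ℝ) (r : ℕ) (δ : ℝ) : Prop :=
  ∀ x : Fin n → ℝ, (vsupp x).card ≤ r →
    (1 - δ) * (∑ i, x i ^ 2) ≤ (∑ i, (A.mulVec x) i ^ 2) ∧
      (∑ i, (A.mulVec x) i ^ 2) ≤ (1 + δ) * (∑ i, x i ^ 2)

/-- The `j`-th column of `A`. -/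
def col {m n : ℕ} (A : Matrix (Fin m) (Fin n) ℝ) (j : Fin n) : Fin m → ℝ :=
  fun i => A i j

/-- Euclidean dot product. -/
def dot {m : ℕ} (u v : Fin m → ℝ) : ℝ := ∑ i, u i * v i

/-- Squared Euclidean norm. -/
def nsq {m : ℕ} (v : Fin m → ℝ) : ℝ := ∑ i, v i ^ 2

/-- Euclidean norm. -/
def enorm {m : ℕ} (v : Fin m → ℝ) : ℝ := Real.sqrt (nsq v)

/-- Squared norm of the restriction of `x` to `T`. -/
def rsq {n : ℕ} (x : Fin n → ℝ) (T : Finset (Fin n)) : ℝ := ∑ i ∈ T, x i ^ 2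

/-- Norm of the restriction of `x` to `T`. -/
def rnorm {n : ℕ} (x : Fin n → ℝ) (T : Finset (Fin n)) : ℝ := Real.sqrt (rsq x T)

/-- Span of the columns of `A` indexed by `J`. -/
def colSpan {m n : ℕ} (A : Matrix (Fin m) (Fin n) ℝ) (J : Finset (Fin n)) :
    Submodule ℝ (EuclideanSpace ℝ (Fin m)) :=
  Submodule.span ℝ ((fun j => (WithLp.equiv 2 (Fin m → ℝ)).symm (col A j)) '' (J : Set (Fin n)))

/-- The projection `P_J^⊥ v` of `v` onto the orthogonal complement of the span of the
columns of `A` indexed by `J`. -/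
def projPerp {m n : ℕ} (A : Matrix (Fin m) (Fin n) ℝ) (J : Finset (Fin n)) (v : Fin m → ℝ) :
    Fin m → ℝ :=
  v - WithLp.equiv 2 (Fin m → ℝ)
    ((Submodule.orthogonalProjectionOnto (colSpan A J) ((WithLp.equiv 2 (Fin m → ℝ)).symm v) :
      EuclideanSpace ℝ (Fin m)))

/-- The OLS selection criterion value for index `j`, given measurements `y` and current
estimated support `Sk`. -/
def olsQuot {m n : ℕ} (A : Matrix (Fin m) (Fin n) ℝ) (y : Fin m → ℝ) (Sk : Finset (Fin n))
    (j : Fin n) : ℝ :=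
  |dot (projPerp A Sk y) (col A j)| / _root_.enorm (projPerp A Sk (col A j))

/-- The estimated support of OLS after `k` iterations (ties broken towards smaller index). -/
def olsSupp {m n : ℕ} (A : Matrix (Fin m) (Fin n) ℝ) (y : Fin m → ℝ) : ℕ → Finset (Fin n)
  | 0 => ∅
  | k + 1 =>
    let Sk := olsSupp A y k
    let cand := (Finset.univ \ Sk).filter
      (fun j => ∀ i ∈ Finset.univ \ Sk, olsQuot A y Sk i ≤ olsQuot A y Sk j)
    if h : cand.Nonempty then insert (cand.min' h) Sk else Sk

/-- The constant `C_K` from the paper. -/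
def CK (K : ℕ) : ℝ :=
  if K = 1 then 1 else if K = 2 then 2/3 else if K = 3 then 4/7 else 1 / Real.sqrt K


lemma aux_exists {m n : ℕ} (A : Matrix (Fin m) (Fin n) ℝ) (J : Finset (Fin n))
    (v : EuclideanSpace ℝ (Fin m)) (hv : v ∈ colSpan A J) :
    ∃ w : Fin n → ℝ, (∀ i, i ∉ J → w i = 0) ∧ WithLp.equiv 2 (Fin m → ℝ) v = A.mulVec w := by
  unfold colSpan at hv
  induction hv using Submodule.span_induction with
  | mem y hy =>
    obtain ⟨j, hj, rfl⟩ := hy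
    refine ⟨Pi.single j 1, ?_, ?_⟩
    · intro i hi
      have : i ≠ j := by rintro rfl; exact hi hj
      simp [this]
    · ext i
      simp [col]
  | zero => exact ⟨0, by simp, by ext i; simp⟩
  | add a b _ _ ha hb =>
    obtain ⟨w, h1, h2⟩ := ha
    obtain ⟨z, h3, h4⟩ := hb
    refine ⟨w + z, fun i hi => by simp [h1 i hi, h3 i hi], ?_⟩
    rw [Matrix.mulVec_add, ← h2, ← h4]; rfl
  | smul c a _ ha =>
    obtain ⟨w, h1, h2⟩ := ha
    refine ⟨c • w, fun i hi => by simp [h1 i hi], ?_⟩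
    rw [Matrix.mulVec_smul, ← h2]; rfl

lemma aux_proj {m n : ℕ} (A : Matrix (Fin m) (Fin n) ℝ) (J : Finset (Fin n)) (v : Fin m → ℝ) :
    ∃ w : Fin n → ℝ, (∀ i, i ∉ J → w i = 0) ∧ projPerp A J v = v - A.mulVec w := by
  obtain ⟨w, h1, h2⟩ := aux_exists A J _ (Submodule.orthogonalProjectionOnto (colSpan A J)
    ((WithLp.equiv 2 (Fin m → ℝ)).symm v)).2
  exact ⟨w, h1, by rw [← h2]; rfl⟩

lemma aux_lin {m n : ℕ} (A : Matrix (Fin m) (Fin n) ℝ) (J : Finset (Fin n)) (v w : Fin m → ℝ)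
    (t : ℝ) : projPerp A J (v + t • w) = projPerp A J v + t • projPerp A J w := by
  unfold projPerp
  have : (WithLp.equiv 2 (Fin m → ℝ)).symm (v + t • w) = (WithLp.equiv 2 (Fin m → ℝ)).symm v
    + t • (WithLp.equiv 2 (Fin m → ℝ)).symm w := rfl
  rw [this, map_add, map_smul]
  ext i
  simp
  ring

lemma aux_dot {m n : ℕ} (A : Matrix (Fin m) (Fin n) ℝ) (J : Finset (Fin n)) (v : Fin m → ℝ)
    (p : EuclideanSpace ℝ (Fin m)) (hp : p ∈ colSpan A J) :
    dot (projPerp A J v) (WithLp.equiv 2 (Fin m → ℝ) p) = 0 := by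
  have h := Submodule.inner_left_of_mem_orthogonal hp
    (Submodule.sub_starProjection_mem_orthogonal (K := colSpan A J)
      ((WithLp.equiv 2 (Fin m → ℝ)).symm v))
  rw [← h, PiLp.inner_apply]
  unfold dot projPerp
  refine Finset.sum_congr rfl fun i _ => ?_
  simp [mul_comm]

lemma aux_dot2 {m n : ℕ} (A : Matrix (Fin m) (Fin n) ℝ) (J : Finset (Fin n)) (v w : Fin m → ℝ) :
    dot (projPerp A J v) w = dot (projPerp A J v) (projPerp A J w) := by
  have h := aux_dot A J v _ (Submodule.orthogonalProjectionOnto (colSpan A J)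
    ((WithLp.equiv 2 (Fin m → ℝ)).symm w)).2
  have : dot (projPerp A J v) (projPerp A J w) = dot (projPerp A J v) w - dot (projPerp A J v)
    (WithLp.equiv 2 (Fin m → ℝ) (Submodule.orthogonalProjectionOnto (colSpan A J)
    ((WithLp.equiv 2 (Fin m → ℝ)).symm w)).1) := by
    unfold dot
    rw [← Finset.sum_sub_distrib]
    refine Finset.sum_congr rfl fun i _ => ?_
    rw [← mul_sub]; rfl
  rw [this, h, sub_zero]

lemma aux_exp {m : ℕ} (u v : Fin m → ℝ) (t : ℝ) :
    nsq (u + t • v) = nsq u + 2 * t * dot u v + t ^ 2 * nsq v := by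
  unfold nsq dot
  rw [Finset.mul_sum, Finset.mul_sum, ← Finset.sum_add_distrib, ← Finset.sum_add_distrib]
  refine Finset.sum_congr rfl fun i _ => ?_
  simp; ring

lemma aux_nsq_nonneg {m : ℕ} (u : Fin m → ℝ) : 0 ≤ nsq u :=
  Finset.sum_nonneg fun _ _ => sq_nonneg _

lemma aux_le {m n : ℕ} (A : Matrix (Fin m) (Fin n) ℝ) (J : Finset (Fin n)) (w : Fin m → ℝ) :
    nsq (projPerp A J w) ≤ nsq w := by
  have h := aux_dot2 A J w w
  have h1 : dot (projPerp A J w) (projPerp A J w) = nsq (projPerp A J w) := by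
    unfold dot nsq
    exact Finset.sum_congr rfl fun i _ => (sq _).symm
  have h2 := aux_exp w (projPerp A J w) (-1)
  have h3 : dot w (projPerp A J w) = dot (projPerp A J w) w :=
    Finset.sum_congr rfl fun i _ => mul_comm _ _
  have := aux_nsq_nonneg (w + (-1 : ℝ) • projPerp A J w)
  rw [h3, h, h1] at h2
  linarith

lemma aux_key {m n K : ℕ} (A : Matrix (Fin m) (Fin n) ℝ) (δ : ℝ) (hδ1 : δ < 1)
    (hRIP : RIP A (K + 1) δ)
    (x : Fin n → ℝ) (S : Finset (Fin n)) (hS : vsupp x = S) (hK : S.card ≤ K)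
    (S' : Finset (Fin n)) (hS' : S' ⊂ S) (j : Fin n) (hj : j ∉ S) (t : ℝ) :
    (1 - δ) * (rsq x (S \ S') + t ^ 2) ≤
      nsq (projPerp A S' (A.mulVec x) + t • projPerp A S' (col A j)) := by
  have hx : ∀ i, i ∉ S → x i = 0 := by
    intro i hi
    by_contra h
    exact hi (by rw [← hS]; simp [vsupp, h])
  rw [← aux_lin]
  obtain ⟨w, h1, h2⟩ := aux_proj A S' (A.mulVec x + t • col A j)
  set z : Fin n → ℝ := x + t • Pi.single j 1 - w with hz
  have hAz : projPerp A S' (A.mulVec x + t • col A j) = A.mulVec z := by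
    rw [h2, hz, Matrix.mulVec_sub, Matrix.mulVec_add, Matrix.mulVec_smul]
    congr 3
    ext i; simp [col]
  have hsub : vsupp z ⊆ insert j S := by
    intro i hi
    by_contra hc
    rw [Finset.mem_insert, not_or] at hc
    have hw : w i = 0 := h1 i fun h => hc.2 (hS'.1 h)
    simp [vsupp, hz, hx i hc.2, hw, hc.1] at hi
  have hcard : (vsupp z).card ≤ K + 1 :=
    (Finset.card_le_card hsub).trans ((Finset.card_insert_le _ _).trans (by omega))
  have hr := (hRIP z hcard).1
  rw [hAz]
  refine le_trans ?_ hr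
  apply mul_le_mul_of_nonneg_left _ (by linarith)
  have hj2 : j ∉ S \ S' := fun h => hj (Finset.mem_sdiff.1 h).1
  have : ∑ i ∈ insert j (S \ S'), z i ^ 2 = rsq x (S \ S') + t ^ 2 := by
    rw [Finset.sum_insert hj2, add_comm]
    congr 1
    · unfold rsq
      refine Finset.sum_congr rfl fun i hi => ?_
      rw [Finset.mem_sdiff] at hi
      have hij : i ≠ j := by rintro rfl; exact hj hi.1
      simp [hz, h1 i hi.2, hij]
    · have : w j = 0 := h1 j fun h => hj (hS'.1 h)
      simp [hz, this, hx j hj]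
  rw [← this]
  exact Finset.sum_le_sum_of_subset_of_nonneg (Finset.subset_univ _) fun _ _ _ => sq_nonneg _

theorem stmt11 {m n K : ℕ} (A : Matrix (Fin m) (Fin n) ℝ) (δ : ℝ)
    (hδ0 : 0 ≤ δ) (hδ1 : δ < 1)
    (hcols : ∀ j, nsq (col A j) = 1)
    (hRIP : RIP A (K + 1) δ)
    (x : Fin n → ℝ) (S : Finset (Fin n)) (hS : vsupp x = S) (hK : S.card ≤ K)
    (S' : Finset (Fin n)) (hS' : S' ⊂ S) (k : ℕ) (hk : S'.card = k)
    (r : Fin m → ℝ) (hr : r = projPerp A S' (A.mulVec x))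
    (j : Fin n) (hj : j ∉ S)
    (q : ℝ) (hq : q = Real.sqrt ((K : ℝ) - (k : ℝ)) * rnorm x (S \ S') * |dot r (col A j)| /
      _root_.enorm (projPerp A S' (col A j))) :
    nsq r - q ≥ (1 - (1 + ((K : ℝ) - (k : ℝ)) / 4) * δ) * rsq x (S \ S') := by
  have key := fun t => aux_key A δ hδ1 hRIP x S hS hK S' hS' j hj t
  have hle := aux_le A S' (col A j)
  rw [hcols] at hle
  have hd : dot r (col A j) = dot r (projPerp A S' (col A j)) := by rw [hr]; exact aux_dot2 ..
  rw [← hr] at key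
  simp only [aux_exp] at key
  rw [hd] at hq
  have hkK : k < K := by
    have := Finset.card_lt_card hS'
    omega
  have hN : (0 : ℝ) ≤ (K : ℝ) - k := by
    have : (k : ℝ) < K := by exact_mod_cast hkK
    linarith
  have hX : 0 ≤ rsq x (S \ S') := Finset.sum_nonneg fun _ _ => sq_nonneg _
  have hB := aux_nsq_nonneg (projPerp A S' (col A j))
  unfold rnorm _root_.enorm at hq
  set X := rsq x (S \ S')
  set N := (K : ℝ) - k
  set B := nsq (projPerp A S' (col A j))
  set D := dot r (projPerp A S' (col A j))
  have hsN := Real.sq_sqrt hN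
  have hsX := Real.sq_sqrt hX
  have hsB := Real.sq_sqrt hB
  set a := Real.sqrt N
  set c := Real.sqrt X
  set b := Real.sqrt B
  have hNX := mul_nonneg hN hX
  rcases (Real.sqrt_nonneg B).eq_or_lt with hb | hb
  · have h0 := key 0
    have : q = 0 := by rw [hq]; change _ / b = 0; rw [show b = 0 from hb.symm, div_zero]
    rw [this]
    nlinarith [mul_nonneg hNX hδ0]
  · change 0 < b at hb
    have hBpos : 0 < B := by rw [← hsB]; positivity
    have main : ∀ t : ℝ, t ^ 2 = N * X / (4 * B) → 2 * t * D = -q →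
        nsq r - q ≥ (1 - (1 + N / 4) * δ) * X := by
      intro t ht htD
      have h := key t
      rw [htD] at h
      have e : t ^ 2 * B = N * X / 4 := by rw [ht]; field_simp
      have e2 : t ^ 2 * B ≤ t ^ 2 := by nlinarith [sq_nonneg t]
      nlinarith [mul_le_mul_of_nonneg_left e2 (by linarith : (0:ℝ) ≤ 1 - δ)]
    have hsq : (a * c / (2 * b)) ^ 2 = N * X / (4 * B) := by
      rw [div_pow, mul_pow, mul_pow, hsN, hsX, hsB]; norm_num
    rcases abs_cases D with ⟨h, _⟩ | ⟨h, _⟩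
    · refine main (-(a * c / (2 * b))) (by rw [neg_sq, hsq]) ?_
      rw [hq, h]; field_simp
    · refine main (a * c / (2 * b)) hsq ?_
      rw [hq, h]; field_simp
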